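/- Suppose a is a stable positive integer. Then there exists K such that for all k ≥ K and all ℓ ≥ 0, ‖(a·3^k + 1)·3^ℓ‖ = ‖a‖ + 3k + 3ℓ + 1. -/

import Mathlib

/-- `CanWrite n k`: `n` can be written using exactly `k` ones with `+` and `*`. -/
inductive CanWrite : ℕ → ℕ → Prop
  | one : CanWrite 1 1
  | add {a b j k : ℕ} : CanWrite a j → CanWrite b k → CanWrite (a + b) (j + k)
  | mul {a b j k : ℕ} : CanWrite a j → CanWrite b k → CanWrite (a * b) (j + k)

/-- Integer complexity: least number of ones needed to write `n`. -/
noncomputable def cpx (n : ℕ) : ℕ := sInf {k | CanWrite n k}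

/-- The defect `δ(n) = ‖n‖ − 3·log₃ n`. -/
noncomputable def defect (n : ℕ) : ℝ := (cpx n : ℝ) - 3 * Real.logb 3 n

/-- `n` is stable if `‖3^k n‖ = 3k + ‖n‖` for all `k`. -/
def Stable (n : ℕ) : Prop := ∀ k : ℕ, cpx (3 ^ k * n) = 3 * k + cpx n

/-- Stable complexity `‖n‖_st = min_{k≥0} (‖3^k n‖ − 3k)`. -/
noncomputable def cpxSt (n : ℕ) : ℕ := sInf {m | ∃ k : ℕ, cpx (3 ^ k * n) = m + 3 * k}

/-- Stable defect `δ_st(n) = ‖n‖_st − 3·log₃ n`. -/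
noncomputable def defectSt (n : ℕ) : ℝ := (cpxSt n : ℝ) - 3 * Real.logb 3 n

open Filter Topology

theorem CanWrite.left_pos {n k : ℕ} (h : CanWrite n k) : 0 < n := by
  induction h with
  | one => exact one_pos
  | add _ _ iha _ => exact Nat.add_pos_left iha _
  | mul _ _ iha ihb => exact Nat.mul_pos iha ihb

theorem CanWrite.right_pos {n k : ℕ} (h : CanWrite n k) : 0 < k := by
  induction h with
  | one => exact one_pos
  | add _ _ iha _ => exact Nat.add_pos_left iha _
  | mul _ _ iha _ => exact Nat.add_pos_left iha _

theorem succ_cube_le {n k : ℕ} (hk : 0 < k) (h : n ^ 3 ≤ 3 ^ k) :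
    (n + 1) ^ 3 ≤ 3 ^ (k + 1) := by
  obtain rfl | rfl | rfl | hn : n = 0 ∨ n = 1 ∨ n = 2 ∨ 3 ≤ n := by lia
  · exact Nat.one_le_pow _ _ (by norm_num)
  · calc (1 + 1) ^ 3 ≤ 3 ^ (1 + 1) := by norm_num
      _ ≤ 3 ^ (k + 1) := Nat.pow_le_pow_right (by norm_num) (by lia)
  · have hk2 : 1 < k := (Nat.pow_lt_pow_iff_right (a := 3) (by norm_num)).1 (by lia)
    calc (2 + 1) ^ 3 ≤ 3 ^ (2 + 1) := by norm_num
      _ ≤ 3 ^ (k + 1) := Nat.pow_le_pow_right (by norm_num) (by lia)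
  · have : (n + 1) ^ 3 ≤ n ^ 3 * 3 := by
      obtain ⟨m, rfl⟩ := Nat.exists_eq_add_of_le hn
      ring_nf
      nlinarith [Nat.zero_le (m ^ 3), Nat.zero_le (m ^ 2)]
    rw [pow_succ]
    lia

theorem CanWrite.cube_le {n k : ℕ} (h : CanWrite n k) : n ^ 3 ≤ 3 ^ k := by
  induction h with
  | one => norm_num
  | @add a b j k ha hb iha ihb =>
    obtain rfl | ha2 : a = 1 ∨ 2 ≤ a := by have := ha.left_pos; lia
    · rw [add_comm]
      exact (succ_cube_le hb.right_pos ihb).trans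
        (Nat.pow_le_pow_right (by norm_num) (by have := ha.right_pos; lia))
    obtain rfl | hb2 : b = 1 ∨ 2 ≤ b := by have := hb.left_pos; lia
    · exact (succ_cube_le ha.right_pos iha).trans
        (Nat.pow_le_pow_right (by norm_num) (by have := hb.right_pos; lia))
    calc (a + b) ^ 3 ≤ (a * b) ^ 3 := Nat.pow_le_pow_left (by nlinarith) 3
      _ ≤ 3 ^ (j + k) := by
        rw [mul_pow, pow_add]
        exact Nat.mul_le_mul iha ihb
  | mul _ _ iha ihb =>
    rw [mul_pow, pow_add]
    exact Nat.mul_le_mul iha ihb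

/-- Away from the powers `3, 9, 27, …`, the cube bound can be improved by a factor `8 / 9`. -/
theorem CanWrite.nine_mul_cube_le {n k : ℕ} (h : CanWrite n k) (hn : ∀ j, n ≠ 3 ^ (j + 1)) :
    9 * n ^ 3 ≤ 8 * 3 ^ k := by
  have mul_bound : ∀ {a b j k : ℕ}, CanWrite b k →
      9 * a ^ 3 ≤ 8 * 3 ^ j → 9 * (a * b) ^ 3 ≤ 8 * 3 ^ (j + k) := by
    intro a b j k hb h
    rw [mul_pow, pow_add, ← mul_assoc, ← mul_assoc]
    exact Nat.mul_le_mul h hb.cube_le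
  have succ_bound : ∀ {a j : ℕ}, CanWrite a j → (∀ i, a + 1 ≠ 3 ^ (i + 1)) →
      9 * (a + 1) ^ 3 ≤ 8 * 3 ^ (j + 1) := by
    intro a j ha hne
    have hj := ha.right_pos
    obtain rfl | rfl | ha3 : a = 1 ∨ a = 2 ∨ 3 ≤ a := by have := ha.left_pos; lia
    · calc 9 * (1 + 1) ^ 3 ≤ 8 * 3 ^ (1 + 1) := by norm_num
        _ ≤ 8 * 3 ^ (j + 1) := by gcongr <;> lia
    · exact absurd rfl (hne 0)
    · have : 9 * (a + 1) ^ 3 ≤ 8 * (a ^ 3 * 3) := by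
        obtain ⟨m, rfl⟩ := Nat.exists_eq_add_of_le ha3
        ring_nf
        nlinarith [Nat.zero_le (m ^ 3), Nat.zero_le (m ^ 2)]
      have := ha.cube_le
      rw [pow_succ 3 j]
      lia
  induction h with
  | one => norm_num
  | @add a b j k ha hb iha ihb =>
    obtain rfl | ha2 : a = 1 ∨ 2 ≤ a := by have := ha.left_pos; lia
    · rw [add_comm 1 b] at hn ⊢
      refine (succ_bound hb hn).trans ?_
      rw [add_comm j k]
      have := ha.right_pos
      gcongr <;> lia
    obtain rfl | hb2 : b = 1 ∨ 2 ≤ b := by have := hb.left_pos; lia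
    · refine (succ_bound ha hn).trans ?_
      have := hb.right_pos
      gcongr <;> lia
    have hab : 9 * (a + b) ^ 3 ≤ 9 * (a * b) ^ 3 := by
      gcongr
      nlinarith
    by_cases ha3 : ∀ i, a ≠ 3 ^ (i + 1)
    · exact hab.trans (mul_bound hb (iha ha3))
    by_cases hb3 : ∀ i, b ≠ 3 ^ (i + 1)
    · rw [mul_comm a b] at hab
      rw [add_comm j k]
      exact hab.trans (mul_bound ha (ihb hb3))
    push Not at ha3 hb3
    have three_le : ∀ i, 3 ≤ 3 ^ (i + 1) := fun i ↦ Nat.le_self_pow (by lia) 3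
    have ha3 : 3 ≤ a := by obtain ⟨i, rfl⟩ := ha3; exact three_le i
    have hb3 : 3 ≤ b := by obtain ⟨i, rfl⟩ := hb3; exact three_le i
    have hsum : 3 * (a + b) ≤ 2 * (a * b) := by nlinarith
    have hcube := Nat.pow_le_pow_left hsum 3
    have hmul : (a * b) ^ 3 ≤ 3 ^ (j + k) := by
      rw [mul_pow, pow_add]
      exact Nat.mul_le_mul ha.cube_le hb.cube_le
    rw [mul_pow, mul_pow 2] at hcube
    lia
  | @mul a b j k ha hb iha ihb =>
    by_cases ha3 : ∀ i, a ≠ 3 ^ (i + 1)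
    · exact mul_bound hb (iha ha3)
    by_cases hb3 : ∀ i, b ≠ 3 ^ (i + 1)
    · rw [mul_comm a b, add_comm j k]
      exact mul_bound ha (ihb hb3)
    push Not at ha3 hb3
    obtain ⟨i, rfl⟩ := ha3
    obtain ⟨l, rfl⟩ := hb3
    exact absurd (by ring) (hn (i + l + 1))

theorem canWrite_self {n : ℕ} (hn : 0 < n) : CanWrite n n := by
  induction n, hn using Nat.le_induction with
  | base => exact .one
  | succ n _ ih => exact ih.add .one

theorem canWrite_cpx {n : ℕ} (hn : 0 < n) : CanWrite n (cpx n) :=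
  Nat.sInf_mem (s := {k | CanWrite n k}) ⟨n, canWrite_self hn⟩

theorem CanWrite.cpx_le {n k : ℕ} (h : CanWrite n k) : cpx n ≤ k :=
  Nat.sInf_le h

theorem cpx_add_le {a b : ℕ} (ha : 0 < a) (hb : 0 < b) : cpx (a + b) ≤ cpx a + cpx b :=
  ((canWrite_cpx ha).add (canWrite_cpx hb)).cpx_le

theorem cpx_mul_le {a b : ℕ} (ha : 0 < a) (hb : 0 < b) : cpx (a * b) ≤ cpx a + cpx b :=
  ((canWrite_cpx ha).mul (canWrite_cpx hb)).cpx_le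

theorem cpx_one_le : cpx 1 ≤ 1 :=
  CanWrite.one.cpx_le

theorem cpx_mul_three_pow_le {n : ℕ} (hn : 0 < n) (j : ℕ) :
    cpx (n * 3 ^ j) ≤ cpx n + 3 * j := by
  induction j with
  | zero => simp
  | succ j ih =>
    have h3 : cpx 3 ≤ 3 := (canWrite_self (by norm_num)).cpx_le
    have := cpx_mul_le (a := n * 3 ^ j) (b := 3) (by positivity) (by norm_num)
    rw [pow_succ, ← mul_assoc]
    lia

/-- The ratio `n³ / 3^‖n‖`, that is, `3 ^ (-δ(n))` where `δ` is the defect. -/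
noncomputable def efficiency (n : ℕ) : ℝ := (n : ℝ) ^ 3 / 3 ^ cpx n

theorem efficiency_pos {n : ℕ} (hn : 0 < n) : 0 < efficiency n := by
  unfold efficiency
  positivity

theorem efficiency_le_one {n : ℕ} (hn : 0 < n) : efficiency n ≤ 1 := by
  unfold efficiency
  rw [div_le_one (by positivity)]
  exact_mod_cast (canWrite_cpx hn).cube_le

theorem efficiency_le_of_ne_three_pow {n : ℕ} (hn : 0 < n) (h : ∀ j, n ≠ 3 ^ (j + 1)) :
    efficiency n ≤ 8 / 9 := by
  have := (canWrite_cpx hn).nine_mul_cube_le h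
  have : (9 : ℝ) * n ^ 3 ≤ 8 * 3 ^ cpx n := by exact_mod_cast this
  unfold efficiency
  rw [div_le_div_iff₀ (by positivity) (by norm_num)]
  linarith

/-- Up to factors of three that do not change the efficiency, a number is `1`, or an optimal sum,
or an optimal product of two numbers of efficiency at most `8 / 9`. -/
theorem efficiency_cases {n : ℕ} (hn : 0 < n) :
    efficiency n = efficiency 1 ∨
    (∃ u v : ℕ, 0 < v ∧ v ≤ u ∧
      efficiency n = ((u : ℝ) + v) ^ 3 / (3 ^ cpx u * 3 ^ cpx v)) ∨
    (∃ u v : ℕ, 0 < u ∧ 0 < v ∧ efficiency u ≤ 8 / 9 ∧ efficiency v ≤ 8 / 9 ∧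
      efficiency n = efficiency u * efficiency v) := by
  induction n using Nat.strong_induction_on with
  | _ n ih =>
  have hw := canWrite_cpx hn
  generalize hc : cpx n = c at hw
  cases hw with
  | one => exact .inl rfl
  | @add u v j k hu hv =>
    have := hu.cpx_le
    have := hv.cpx_le
    have := cpx_add_le hu.left_pos hv.left_pos
    have heff : efficiency (u + v) = ((u : ℝ) + v) ^ 3 / (3 ^ cpx u * 3 ^ cpx v) := by
      rw [efficiency, show cpx (u + v) = cpx u + cpx v by lia, pow_add]
      push_cast
      rfl
    refine .inr (.inl ?_)
    obtain huv | huv := le_total v u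
    · exact ⟨u, v, hv.left_pos, huv, heff⟩
    · exact ⟨v, u, hu.left_pos, huv, by rw [heff, add_comm, mul_comm]⟩
  | @mul u v j k hu hv =>
    have := hu.cpx_le
    have := hv.cpx_le
    have hle := cpx_mul_le hu.left_pos hv.left_pos
    have hcpx : cpx (u * v) = cpx u + cpx v := by lia
    have reduce : ∀ {a b : ℕ}, 0 < a → 0 < b → a * b = u * v → cpx (a * b) = cpx a + cpx b →
        (∃ i, a = 3 ^ (i + 1)) → ∃ m, 0 < m ∧ m < u * v ∧ efficiency (u * v) = efficiency m := by
      rintro a b ha hb hab hcab ⟨i, rfl⟩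
      have hm : 0 < b * 3 ^ i := by positivity
      have hmul : u * v = b * 3 ^ i * 3 ^ 1 := by rw [← hab]; ring
      have hupper := cpx_mul_three_pow_le hm 1
      have hmle := cpx_mul_three_pow_le hb i
      have hlower : 3 * (i + 1) ≤ cpx (3 ^ (i + 1)) := by
        have := (canWrite_cpx ha).cube_le
        rw [← pow_mul] at this
        have := (Nat.pow_le_pow_iff_right (by norm_num)).1 this
        lia
      rw [hab, hmul] at hcab
      refine ⟨b * 3 ^ i, hm, by lia, ?_⟩
      rw [hmul, efficiency, efficiency,
        show cpx (b * 3 ^ i * 3 ^ 1) = cpx (b * 3 ^ i) + 3 by lia]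
      push_cast
      rw [pow_add, mul_pow]
      field_simp
    by_cases hu3 : ∃ i, u = 3 ^ (i + 1)
    · obtain ⟨m, hm, hlt, heq⟩ := reduce hu.left_pos hv.left_pos rfl hcpx hu3
      rw [heq]
      exact ih m hlt hm
    by_cases hv3 : ∃ i, v = 3 ^ (i + 1)
    · obtain ⟨m, hm, hlt, heq⟩ := reduce hv.left_pos hu.left_pos (mul_comm v u)
        (by rw [mul_comm, hcpx, add_comm]) hv3
      rw [heq]
      exact ih m hlt hm
    push Not at hu3 hv3
    refine .inr (.inr ⟨u, v, hu.left_pos, hv.left_pos,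
      efficiency_le_of_ne_three_pow hu.left_pos hu3,
      efficiency_le_of_ne_three_pow hv.left_pos hv3, ?_⟩)
    rw [efficiency, hcpx, efficiency, efficiency, pow_add]
    push_cast
    rw [mul_pow]
    field_simp

theorem Ultrafilter.eventually_eq_const_or_tendsto_atTop {ι : Type*} (U : Ultrafilter ι)
    (f : ι → ℕ) : (∃ c, ∀ᶠ i in U, f i = c) ∨ Tendsto f U atTop := by
  by_cases h : ∃ c, ∀ᶠ i in U, f i = c
  · exact .inl h
  push Not at h
  refine .inr (tendsto_atTop.2 fun M ↦ ?_)
  have hne : ∀ᶠ i in U, ∀ c ∈ Finset.range M, f i ≠ c :=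
    (eventually_all_finset _).2 fun c _ ↦ h c
  filter_upwards [hne] with i hi
  by_contra! hlt
  exact hi _ (Finset.mem_range.2 hlt) rfl

theorem Ultrafilter.eventually_eq_const_of_le {ι : Type*} (U : Ultrafilter ι) {f : ι → ℕ} {B : ℕ}
    (h : ∀ᶠ i in U, f i ≤ B) : ∃ c, ∀ᶠ i in U, f i = c := by
  refine (U.eventually_eq_const_or_tendsto_atTop f).resolve_right fun ht ↦ ?_
  obtain ⟨i, hi, hi'⟩ := (h.and (ht.eventually_gt_atTop B)).exists
  lia

/-- Along `U`, the efficiencies of `n` converge to that of some `b` divided by a power of three, and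
they are eventually constant if that power is trivial. -/
def HasEfficiencyLimit {ι : Type*} (U : Ultrafilter ι) (n : ι → ℕ) : Prop :=
  ∃ b k : ℕ, 0 < b ∧ Tendsto (fun i ↦ efficiency (n i)) U (𝓝 (efficiency b / 3 ^ k)) ∧
    (k = 0 → ∀ᶠ i in U, efficiency (n i) = efficiency b)

theorem HasEfficiencyLimit.of_eventually_eq {ι : Type*} {U : Ultrafilter ι} {n : ι → ℕ} {c : ℝ}
    (hn : ∀ᶠ i in U, 0 < n i) (h : ∀ᶠ i in U, efficiency (n i) = c) : HasEfficiencyLimit U n := by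
  obtain ⟨i, hi, hic⟩ := (hn.and h).exists
  refine ⟨n i, 0, hi, ?_, fun _ ↦ by rwa [hic]⟩
  rw [pow_zero, div_one, hic]
  exact tendsto_const_nhds.congr' (h.mono fun _ hj ↦ hj.symm)

theorem HasEfficiencyLimit.mul {ι : Type*} {U : Ultrafilter ι} {n u v : ι → ℕ}
    (hn : ∀ᶠ i in U, 0 < n i) (hu : HasEfficiencyLimit U u) (hv : HasEfficiencyLimit U v)
    (h : ∀ᶠ i in U, efficiency (n i) = efficiency (u i) * efficiency (v i)) :
    HasEfficiencyLimit U n := by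
  obtain ⟨b, k, hb, hub, hub'⟩ := hu
  obtain ⟨c, l, hc, hvc, hvc'⟩ := hv
  by_cases hkl : k = 0 ∧ l = 0
  · refine .of_eventually_eq (c := efficiency b * efficiency c) hn ?_
    filter_upwards [h, hub' hkl.1, hvc' hkl.2] with i hi hi₁ hi₂
    rw [hi, hi₁, hi₂]
  obtain ⟨d, hd⟩ := Nat.exists_eq_add_of_le (cpx_mul_le hb hc)
  refine ⟨b * c, k + l + d, by positivity, ?_, fun h0 ↦ absurd ⟨by lia, by lia⟩ hkl⟩
  have hlim : efficiency (b * c) / 3 ^ (k + l + d) =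
      efficiency b / 3 ^ k * (efficiency c / 3 ^ l) := by
    have h3 : (3 : ℝ) ^ cpx b * 3 ^ cpx c = 3 ^ cpx (b * c) * 3 ^ d := by
      rw [← pow_add, ← pow_add, hd]
    simp only [efficiency, pow_add]
    rw [div_div, div_div, div_div, div_mul_div_comm]
    push_cast
    congr 1
    · ring
    · linear_combination (-(3 : ℝ) ^ k * 3 ^ l) * h3
  rw [hlim]
  exact (hub.mul hvc).congr' (h.mono fun _ hi ↦ hi.symm)

theorem hasEfficiencyLimit_of_lt {ι : Type*} (U : Ultrafilter ι) (N : ℕ) (n : ι → ℕ)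
    (hn : ∀ᶠ i in U, 0 < n i) (hN : ∀ᶠ i in U, (8 / 9 : ℝ) ^ N < efficiency (n i)) :
    HasEfficiencyLimit U n := by
  induction N generalizing n with
  | zero =>
    obtain ⟨i, hi, hi'⟩ := (hn.and hN).exists
    exact absurd (efficiency_le_one hi) (by simpa using hi')
  | succ N ih =>
    have hcases := hn.mono fun i hi ↦ efficiency_cases hi
    rw [Ultrafilter.eventually_or, Ultrafilter.eventually_or] at hcases
    obtain h1 | hadd | hmul := hcases
    · exact .of_eventually_eq hn h1
    · obtain ⟨u, hadd⟩ := skolem.1 hadd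
      obtain ⟨v, hadd⟩ := skolem.1 hadd
      have hρ : (0 : ℝ) < (8 / 9) ^ (N + 1) := by positivity
      obtain ⟨B, hB⟩ := exists_nat_gt (8 / (8 / 9 : ℝ) ^ (N + 1))
      have hv : ∀ᶠ i in U, v i ≤ B := by
        filter_upwards [hadd, hN] with i ⟨hv0, hvu, heff⟩ hlt
        have hu0 := hv0.trans_le hvu
        have hcu : ((u i : ℝ)) ^ 3 ≤ 3 ^ cpx (u i) := by exact_mod_cast (canWrite_cpx hu0).cube_le
        have hcv : (v i : ℝ) ≤ 3 ^ cpx (v i) := by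
          have := (Nat.le_self_pow (n := 3) (by norm_num) (v i)).trans (canWrite_cpx hv0).cube_le
          exact_mod_cast this
        have hvu' : (v i : ℝ) ≤ u i := by exact_mod_cast hvu
        have hsum : ((u i : ℝ) + v i) ^ 3 ≤ 8 * 3 ^ cpx (u i) := by
          calc ((u i : ℝ) + v i) ^ 3 ≤ (u i + u i) ^ 3 := by gcongr
            _ = 8 * (u i : ℝ) ^ 3 := by ring
            _ ≤ _ := by gcongr
        rw [heff, lt_div_iff₀ (by positivity)] at hlt
        rw [div_lt_iff₀ hρ] at hB
        have h3u : (0 : ℝ) < 3 ^ cpx (u i) := by positivity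
        have hlt8 : (8 / 9 : ℝ) ^ (N + 1) * 3 ^ cpx (v i) < 8 :=
          lt_of_mul_lt_mul_right (by linarith) h3u.le
        have : (v i : ℝ) < B := by
          refine lt_of_mul_lt_mul_left (a := (8 / 9 : ℝ) ^ (N + 1)) ?_ hρ.le
          nlinarith
        exact_mod_cast this.le
      obtain ⟨w, hw⟩ := U.eventually_eq_const_of_le hv
      obtain ⟨c, hc⟩ | hu := U.eventually_eq_const_or_tendsto_atTop u
      · refine .of_eventually_eq hn (c := ((c : ℝ) + w) ^ 3 / (3 ^ cpx c * 3 ^ cpx w)) ?_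
        filter_upwards [hadd, hw, hc] with i ⟨_, _, hi⟩ hiw hic
        rw [hi, hiw, hic]
      have hw0 : 0 < w := by
        obtain ⟨i, hi, hiw⟩ := (hadd.and hw).exists
        exact hiw ▸ hi.1
      have hcw := (canWrite_cpx hw0).right_pos
      have hfactor : ∀ᶠ i in U,
          efficiency (n i) = efficiency (u i) * ((1 + w / (u i : ℝ)) ^ 3 / 3 ^ cpx w) := by
        filter_upwards [hadd, hw] with i ⟨hv0, hvu, heff⟩ hiw
        have : (0 : ℝ) < u i := by exact_mod_cast hv0.trans_le hvu
        rw [heff, hiw, efficiency]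
        field_simp
      have hone : Tendsto (fun i ↦ (1 + w / (u i : ℝ)) ^ 3) U (𝓝 1) := by
        have h0 : Tendsto (fun i ↦ (w : ℝ) / (u i : ℝ)) U (𝓝 0) :=
          (tendsto_natCast_atTop_atTop.comp hu).const_div_atTop _
        simpa using (h0.const_add 1).pow 3
      have hu0 : ∀ᶠ i in U, 0 < u i := hu.eventually_gt_atTop 0
      have hulim : HasEfficiencyLimit U u := by
        refine ih u hu0 ?_
        filter_upwards [hfactor, hN, hu0,
          hone.eventually_lt_const (show (1 : ℝ) < 8 / 3 by norm_num)] with i hfac hlt hui h83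
        have hpos := efficiency_pos hui
        have hle : (1 + w / (u i : ℝ)) ^ 3 / 3 ^ cpx w ≤ 8 / 9 := by
          rw [div_le_iff₀ (by positivity)]
          have : (3 : ℝ) ≤ 3 ^ cpx w := le_self_pow₀ (by norm_num) hcw.ne'
          linarith
        rw [hfac, pow_succ] at hlt
        nlinarith
      obtain ⟨b, k, hb, hub, -⟩ := hulim
      refine ⟨b, k + cpx w, hb, ?_, fun h0 ↦ by lia⟩
      have := hub.mul (hone.div_const (3 ^ cpx w))
      rw [div_mul_div_comm, mul_one, ← pow_add] at this
      exact this.congr' (hfactor.mono fun _ hi ↦ hi.symm)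
    · obtain ⟨u, hmul⟩ := skolem.1 hmul
      obtain ⟨v, hmul⟩ := skolem.1 hmul
      have hu0 : ∀ᶠ i in U, 0 < u i := hmul.mono fun _ h ↦ h.1
      have hv0 : ∀ᶠ i in U, 0 < v i := hmul.mono fun _ h ↦ h.2.1
      refine .mul hn (ih u hu0 ?_) (ih v hv0 ?_) (hmul.mono fun _ h ↦ h.2.2.2.2)
      all_goals
        filter_upwards [hmul, hN] with i ⟨hui, hvi, hu, hv, heq⟩ hlt
        have := efficiency_pos hui
        have := efficiency_pos hvi
        rw [heq, pow_succ] at hlt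
        nlinarith

theorem exists_mul_three_pow_eq_of_cube {a b p q : ℕ} (hb : 0 < b)
    (h : a ^ 3 * 3 ^ p = b ^ 3 * 3 ^ q) : ∃ s t, a * 3 ^ s = b * 3 ^ t := by
  have hdvd : b ^ 3 ∣ (a * 3 ^ p) ^ 3 := by
    refine ⟨3 ^ q * 3 ^ (2 * p), ?_⟩
    rw [← mul_assoc, ← h]
    ring
  obtain ⟨c, hc⟩ := (Nat.pow_dvd_pow_iff (by norm_num)).1 hdvd
  have hc3 : c ^ 3 = 3 ^ (q + 2 * p) := by
    refine Nat.eq_of_mul_eq_mul_left (show 0 < b ^ 3 by positivity) ?_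
    rw [← mul_pow, ← hc, pow_add, ← mul_assoc, ← h]
    ring
  obtain ⟨t, -, ht⟩ := (Nat.dvd_prime_pow Nat.prime_three).1
    (hc3 ▸ dvd_pow_self c (by norm_num : 3 ≠ 0))
  exact ⟨p, t, by rw [hc, ht]⟩

/-- A stable number has maximal efficiency among all numbers whose efficiency differs from its own
by a power of three. -/
theorem Stable.eq_zero_of_efficiency_eq {a b e : ℕ} (ha : 0 < a) (hstab : Stable a) (hb : 0 < b)
    (h : efficiency b = efficiency a * 3 ^ e) : e = 0 := by
  have hcube : b ^ 3 * 3 ^ cpx a = a ^ 3 * 3 ^ (cpx b + e) := by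
    unfold efficiency at h
    field_simp at h
    rw [pow_add]
    have : (b : ℝ) ^ 3 * 3 ^ cpx a = a ^ 3 * (3 ^ cpx b * 3 ^ e) := by linarith
    exact_mod_cast this
  obtain ⟨s, t, hst⟩ := exists_mul_three_pow_eq_of_cube ha hcube
  have hle := cpx_mul_three_pow_le hb s
  rw [hst, mul_comm, hstab t] at hle
  have hpow : (3 : ℕ) ^ (3 * t + cpx a) = 3 ^ (cpx b + e + 3 * s) := by
    refine Nat.eq_of_mul_eq_mul_left (show 0 < a ^ 3 by positivity) ?_
    calc a ^ 3 * 3 ^ (3 * t + cpx a) = (a * 3 ^ t) ^ 3 * 3 ^ cpx a := by ring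
      _ = b ^ 3 * 3 ^ cpx a * 3 ^ (3 * s) := by rw [← hst]; ring
      _ = a ^ 3 * 3 ^ (cpx b + e + 3 * s) := by rw [hcube]; ring
  have := Nat.pow_right_injective (by norm_num : 2 ≤ 3) hpow
  lia

theorem cpx_stable_linear (a : ℕ) (ha : 0 < a) (hstab : Stable a) :
    ∃ K : ℕ, ∀ k : ℕ, K ≤ k → ∀ ℓ : ℕ,
      cpx ((a * 3 ^ k + 1) * 3 ^ ℓ) = cpx a + 3 * k + 3 * ℓ + 1 := by
  by_contra! hcon
  choose k hk ℓ hne using hcon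
  set n : ℕ → ℕ := fun i ↦ (a * 3 ^ k i + 1) * 3 ^ ℓ i with hn
  have hn0 : ∀ i, 0 < n i := fun i ↦ by positivity
  have hle : ∀ i, cpx (n i) ≤ cpx a + 3 * k i + 3 * ℓ i := by
    intro i
    have h1 := cpx_mul_three_pow_le (n := a * 3 ^ k i + 1) (by positivity) (ℓ i)
    have h2 := cpx_add_le (a := a * 3 ^ k i) (b := 1) (by positivity) one_pos
    have h3 := cpx_mul_three_pow_le ha (k i)
    have := cpx_one_le
    have := hne i
    simp only [hn]
    lia
  choose e he using fun i ↦ Nat.exists_eq_add_of_le (hle i)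
  have heff : ∀ i, efficiency (n i) =
      efficiency a * 3 ^ e i * (1 + 1 / (a * 3 ^ k i : ℝ)) ^ 3 := by
    intro i
    have h3 : (3 : ℝ) ^ cpx a * 3 ^ (3 * k i) * 3 ^ (3 * ℓ i) = 3 ^ cpx (n i) * 3 ^ e i := by
      rw [← pow_add, ← pow_add, ← pow_add, he]
    have hni : (n i : ℝ) = (a * 3 ^ k i + 1) * 3 ^ ℓ i := by simp [hn]
    have ha' : (0 : ℝ) < a := by exact_mod_cast ha
    rw [efficiency, efficiency, hni, div_eq_iff (by positivity)]
    field_simp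
    rw [pow_mul', pow_mul'] at h3
    linear_combination h3
  have hlt : ∀ i, efficiency a * 3 ^ e i < efficiency (n i) := by
    intro i
    have := efficiency_pos ha
    rw [heff]
    refine lt_mul_of_one_lt_right (by positivity) (one_lt_pow₀ ?_ (by norm_num))
    have : (0 : ℝ) < 1 / (a * 3 ^ k i : ℝ) := by positivity
    linarith
  let U := hyperfilter ℕ
  obtain ⟨N, hN⟩ := exists_pow_lt_of_lt_one (efficiency_pos ha) (by norm_num : (8 / 9 : ℝ) < 1)
  obtain ⟨b, m, hb, hlim, hconst⟩ := hasEfficiencyLimit_of_lt U N n (.of_forall hn0)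
    (.of_forall fun i ↦ by
      have := le_mul_of_one_le_right (efficiency_pos ha).le
        (one_le_pow₀ (by norm_num : (1 : ℝ) ≤ 3) (n := e i))
      linarith [hlt i])
  obtain ⟨B, hB⟩ := exists_nat_gt (1 / efficiency a)
  obtain ⟨d, hd⟩ : ∃ d, ∀ᶠ i in U, e i = d := by
    refine U.eventually_eq_const_of_le (B := B) (.of_forall fun i ↦ ?_)
    have h1 := (hlt i).trans_le (efficiency_le_one (hn0 i))
    rw [div_lt_iff₀ (efficiency_pos ha)] at hB
    have h2 : (3 : ℝ) ^ e i < B :=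
      lt_of_mul_lt_mul_left (by linarith) (efficiency_pos ha).le
    have h3 : 3 ^ e i < B := by exact_mod_cast h2
    exact ((Nat.lt_pow_self (by norm_num)).trans h3).le
  have hk' : Tendsto k U atTop :=
    (tendsto_atTop_mono hk tendsto_id).mono_left Nat.hyperfilter_le_atTop
  have hlim' : Tendsto (fun i ↦ efficiency (n i)) U (𝓝 (efficiency a * 3 ^ d)) := by
    have hpow : Tendsto (fun i ↦ (a * 3 ^ k i : ℝ)) U atTop :=
      ((tendsto_pow_atTop_atTop_of_one_lt (by norm_num : (1 : ℝ) < 3)).comp hk').const_mul_atTop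
        (by exact_mod_cast ha)
    have hone : Tendsto (fun i ↦ (1 + 1 / (a * 3 ^ k i : ℝ)) ^ 3) U (𝓝 1) := by
      simpa using ((hpow.const_div_atTop 1).const_add 1).pow 3
    have := hone.const_mul (efficiency a * 3 ^ d)
    rw [mul_one] at this
    refine this.congr' (hd.mono fun i hi ↦ ?_)
    simp only [heff, hi]
  have heq := tendsto_nhds_unique hlim hlim'
  have hzero : d + m = 0 := by
    refine hstab.eq_zero_of_efficiency_eq ha hb ?_
    rw [div_eq_iff (by positivity)] at heq
    rw [heq, pow_add, mul_assoc]
  obtain ⟨rfl, rfl⟩ : d = 0 ∧ m = 0 := by lia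
  obtain ⟨i, hi, hid⟩ := ((hconst rfl).and hd).exists
  have := hlt i
  rw [pow_zero, div_one, mul_one] at heq
  rw [hi, hid, heq, pow_zero, mul_one] at this
  exact lt_irrefl _ this
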